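/- arXiv:math/0012029 — 2 statements merged into one kernel-verified Lean document; each statement's English description precedes it below -/
import Mathlib

section
/- For each ordered pair (α,β) in {(123,132), (123,213), (132,123), (213,123), (231,321), (312,321), (321,231), (321,312)} of patterns of length three, and for every n ≥ 3, the number of permutations of {1,…,n} that avoid α and contain β exactly once is s_n(α;β) = (n−2)·2^{n−3}. -/
/-- Number of occurrences of the pattern `α ∈ S_k` in the permutation `π ∈ S_n`:
the number of strictly increasing choices of `k` indices such that the corresponding
subword of `π` is order-isomorphic to `α`. -/
noncomputable def occCount {k n : ℕ} (α : Equiv.Perm (Fin k)) (π : Equiv.Perm (Fin n)) : ℕ :=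
  Nat.card {f : Fin k → Fin n // StrictMono f ∧ ∀ a b : Fin k, α a < α b ↔ π (f a) < π (f b)}

/-- `π` avoids the pattern `α`. -/
def avoids {k n : ℕ} (α : Equiv.Perm (Fin k)) (π : Equiv.Perm (Fin n)) : Prop :=
  occCount α π = 0

/-- `π` contains the pattern `α` exactly once. -/
def containsOnce {k n : ℕ} (α : Equiv.Perm (Fin k)) (π : Equiv.Perm (Fin n)) : Prop :=
  occCount α π = 1

/-- The pattern `123` (as a permutation of `Fin 3`, 0-indexed). -/
def p123 : Equiv.Perm (Fin 3) := ⟨![0,1,2], ![0,1,2], by decide, by decide⟩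
/-- The pattern `132`. -/
def p132 : Equiv.Perm (Fin 3) := ⟨![0,2,1], ![0,2,1], by decide, by decide⟩
/-- The pattern `213`. -/
def p213 : Equiv.Perm (Fin 3) := ⟨![1,0,2], ![1,0,2], by decide, by decide⟩
/-- The pattern `231`. -/
def p231 : Equiv.Perm (Fin 3) := ⟨![1,2,0], ![2,0,1], by decide, by decide⟩
/-- The pattern `312`. -/
def p312 : Equiv.Perm (Fin 3) := ⟨![2,0,1], ![1,2,0], by decide, by decide⟩
/-- The pattern `321`. -/
def p321 : Equiv.Perm (Fin 3) := ⟨![2,1,0], ![2,1,0], by decide, by decide⟩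

/-- `s_n(α;β)`: the number of permutations of `{1,…,n}` that avoid `α` and contain `β`
exactly once. -/
noncomputable def sAvoidContain (α β : Equiv.Perm (Fin 3)) (n : ℕ) : ℕ :=
  Nat.card {π : Equiv.Perm (Fin n) // avoids α π ∧ containsOnce β π}

/-- `s_n(∅;{α,β})`: the number of permutations of `{1,…,n}` that contain each of `α` and `β`
exactly once. -/
noncomputable def sContainBoth (α β : Equiv.Perm (Fin 3)) (n : ℕ) : ℕ :=
  Nat.card {π : Equiv.Perm (Fin n) // containsOnce α π ∧ containsOnce β π}

/-!
Since `132 = 1 ⊕ 21` and `123 = 1 ⊕ 12`, prepending the letter `m` to `σ` adds to the occurrences of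
`1 ⊕ α` exactly the occurrences of `α` among the letters of `σ` that end up above `m`. Summed over
the two patterns `α ∈ S₂`, these new occurrences are all pairs of such letters.

Hence a permutation of length at least `2` avoids both patterns iff its first letter is one of the
two largest and the rest avoids both, which gives `2 ^ (n - 1)` such permutations. If `1 ⊕ α` is
avoided and `1 ⊕ β` occurs once, then either the first letter is one of the two largest and the
rest has the same property, or the first letter is the third largest, the rest avoids both, and its
two largest letters form `β`. As the rest starts with one of its two largest letters, the last
condition determines its first letter. So the count `G` satisfies `G (n + 3) = 2 G (n + 2) + 2 ^ n`.
The other pairs of patterns follow by reversal and complementation.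
-/

open Equiv Function

/-! ### Symmetries of pattern containment -/

section Symmetry

variable {k n : ℕ}

/-- The choice of positions `f` is an occurrence of the pattern `α` in `π`. -/
def IsOccurrence (α : Perm (Fin k)) (π : Perm (Fin n)) (f : Fin k → Fin n) : Prop :=
  StrictMono f ∧ ∀ a b, α a < α b ↔ π (f a) < π (f b)

lemma isOccurrence_mul_revPerm_iff {α : Perm (Fin k)} {π : Perm (Fin n)} {f : Fin k → Fin n} :
    IsOccurrence (α * Fin.revPerm) (π * Fin.revPerm) f ↔
      IsOccurrence α π (Fin.rev ∘ f ∘ Fin.rev) := by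
  refine and_congr ⟨fun hf a b hab => ?_, fun hf a b hab => ?_⟩
    ⟨fun h a b => ?_, fun h a b => ?_⟩
  · simpa using hf (Fin.rev_lt_rev.2 hab)
  · simpa using hf (Fin.rev_lt_rev.2 hab)
  · simpa using h a.rev b.rev
  · simpa using h a.rev b.rev

lemma isOccurrence_revPerm_mul_iff {α : Perm (Fin k)} {π : Perm (Fin n)} {f : Fin k → Fin n} :
    IsOccurrence (Fin.revPerm * α) (Fin.revPerm * π) f ↔ IsOccurrence α π f := by
  simp only [IsOccurrence, Perm.mul_apply, Fin.revPerm_apply, Fin.rev_lt_rev]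
  exact and_congr_right' forall_comm

lemma occCount_mul_revPerm (α : Perm (Fin k)) (π : Perm (Fin n)) :
    occCount (α * Fin.revPerm) (π * Fin.revPerm) = occCount α π :=
  Nat.card_congr <| (Equiv.arrowCongr Fin.revPerm Fin.revPerm).subtypeEquiv fun _ =>
    isOccurrence_mul_revPerm_iff

lemma occCount_revPerm_mul (α : Perm (Fin k)) (π : Perm (Fin n)) :
    occCount (Fin.revPerm * α) (Fin.revPerm * π) = occCount α π :=
  Nat.card_congr <| Equiv.subtypeEquivRight fun _ => isOccurrence_revPerm_mul_iff

lemma sAvoidContain_mul_revPerm (α β : Perm (Fin 3)) (n : ℕ) :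
    sAvoidContain (α * Fin.revPerm) (β * Fin.revPerm) n = sAvoidContain α β n :=
  .symm <| Nat.card_congr <| (Equiv.mulRight Fin.revPerm).subtypeEquiv fun π => by
    simp only [avoids, containsOnce, coe_mulRight, occCount_mul_revPerm]

lemma sAvoidContain_revPerm_mul (α β : Perm (Fin 3)) (n : ℕ) :
    sAvoidContain (Fin.revPerm * α) (Fin.revPerm * β) n = sAvoidContain α β n :=
  .symm <| Nat.card_congr <| (Equiv.mulLeft Fin.revPerm).subtypeEquiv fun π => by
    simp only [avoids, containsOnce, coe_mulLeft, occCount_revPerm_mul]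

end Symmetry

/-! ### Occurrences among the large letters -/

section OccurrencesAbove

variable {k n : ℕ}

/-- The number of occurrences of `α` in `π` all of whose letters, counted from `0`, are at
least `m`. -/
noncomputable def occCountAbove (m : ℕ) (α : Perm (Fin k)) (π : Perm (Fin n)) : ℕ :=
  Nat.card {f // IsOccurrence α π f ∧ ∀ a, m ≤ (π (f a) : ℕ)}

lemma forall_lt_iff_lt_iff_inv_eq_sort {ι : Type*} [LinearOrder ι] {g : Fin k → ι}
    (hg : Injective g) (α : Perm (Fin k)) :
    (∀ a b, α a < α b ↔ g a < g b) ↔ α⁻¹ = Tuple.sort g := by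
  constructor
  · intro h
    refine Tuple.eq_sort_iff.2 ⟨StrictMono.monotone fun a b hab => ?_, fun i j hij hgij => ?_⟩
    · exact (h _ _).1 (by simpa using hab)
    · exact absurd (α⁻¹.injective (hg hgij)) hij.ne
  · intro h a b
    have hmono : StrictMono (g ∘ ⇑α⁻¹) :=
      (h ▸ Tuple.monotone_sort g).strictMono_of_injective (hg.comp α⁻¹.injective)
    simpa using hmono.lt_iff_lt (a := α a) (b := α b) |>.symm

lemma card_le_apply (m : ℕ) (π : Perm (Fin n)) : Nat.card {i // m ≤ (π i : ℕ)} = n - m := by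
  have hcompl := Finset.card_filter_add_card_filter_not (s := (Finset.univ : Finset (Fin n)))
    (fun i => (i : ℕ) < m)
  simp only [not_lt, Fin.card_filter_val_lt, Finset.card_univ, Fintype.card_fin] at hcompl
  calc Nat.card {i // m ≤ (π i : ℕ)}
      = Nat.card {i : Fin n // m ≤ (i : ℕ)} :=
        Nat.card_congr <| π.subtypeEquiv fun _ => Iff.rfl
    _ = n - m := by
        rw [Nat.card_eq_fintype_card, Fintype.card_subtype]
        omega

lemma card_strictMono_le_apply (m : ℕ) (π : Perm (Fin n)) :
    Nat.card {f : Fin k → Fin n // StrictMono f ∧ ∀ a, m ≤ (π (f a) : ℕ)} =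
      (n - m).choose k := by
  let e : {f : Fin k → Fin n // StrictMono f ∧ ∀ a, m ≤ (π (f a) : ℕ)} ≃
      (Fin k ↪o {i // m ≤ (π i : ℕ)}) :=
    { toFun f := OrderEmbedding.ofStrictMono (fun a => ⟨f.1 a, f.2.2 a⟩) f.2.1
      invFun f := ⟨fun a => f a, f.strictMono, fun a => (f a).2⟩ }
  rw [Nat.card_congr (e.trans Set.powersetCard.ofFinEmbEquiv), Set.powersetCard.card,
    card_le_apply]

lemma sum_occCountAbove (m : ℕ) (π : Perm (Fin n)) :
    ∑ α : Perm (Fin k), occCountAbove m α π = (n - m).choose k := by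
  have hsort {α : Perm (Fin k)} {f : Fin k → Fin n} :
      IsOccurrence α π f ↔ StrictMono f ∧ α⁻¹ = Tuple.sort (π ∘ f) :=
    and_congr_right fun hf =>
      forall_lt_iff_lt_iff_inv_eq_sort (π.injective.comp hf.injective) α
  rw [← card_strictMono_le_apply m π]
  simp only [occCountAbove]
  rw [← Nat.card_sigma]
  refine Nat.card_congr
    { toFun x := ⟨x.2.1, x.2.2.1.1, x.2.2.2⟩
      invFun f := ⟨(Tuple.sort (π ∘ f.1))⁻¹, f.1, hsort.2 ⟨f.2.1, inv_inv _⟩, f.2.2⟩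
      left_inv := ?_
      right_inv _ := rfl }
  rintro ⟨α, f, hf, hm⟩
  obtain rfl : α = (Tuple.sort (π ∘ f))⁻¹ := by rw [← (hsort.1 hf).2, inv_inv]
  rfl

end OccurrencesAbove

/-! ### Prepending a letter -/

section Prepend

variable {k n : ℕ}

/-- The permutation with first letter `m` whose other letters are in the same relative order as
those of `σ`. For `m = 0` this is the direct sum `1 ⊕ σ`. -/
def prepend (m : Fin (n + 1)) (σ : Perm (Fin n)) : Perm (Fin (n + 1)) :=
  (finSuccEquiv n).trans ((optionCongr σ).trans (finSuccEquiv' m).symm)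

@[simp]
lemma prepend_zero (m : Fin (n + 1)) (σ : Perm (Fin n)) : prepend m σ 0 = m := by
  simp [prepend]

@[simp]
lemma prepend_succ (m : Fin (n + 1)) (σ : Perm (Fin n)) (i : Fin n) :
    prepend m σ i.succ = m.succAbove (σ i) := by
  simp [prepend]

lemma prepend_bijective (n : ℕ) :
    Bijective fun p : Fin (n + 1) × Perm (Fin n) => prepend p.1 p.2 := by
  refine (Fintype.bijective_iff_injective_and_card _).2
    ⟨?_, by simp [Fintype.card_perm, Nat.factorial_succ]⟩
  rintro ⟨m, σ⟩ ⟨m', σ'⟩ h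
  obtain rfl : m = m' := by simpa using DFunLike.congr_fun h 0
  refine Prod.ext rfl (Equiv.ext fun i => ?_)
  simpa using DFunLike.congr_fun h i.succ

lemma card_subtype_perm_succ (P : Perm (Fin (n + 1)) → Prop) :
    Nat.card {π // P π} = ∑ m, Nat.card {σ // P (prepend m σ)} := by
  rw [← Nat.card_sigma]
  exact .symm <| Nat.card_congr <|
    (subtypeProdEquivSigmaSubtype fun m σ => P (prepend m σ)).symm.trans <|
      (Equiv.ofBijective _ (prepend_bijective n)).subtypeEquiv fun _ => Iff.rfl

lemma isOccurrence_prepend_succ_comp_iff {α : Perm (Fin k)} {m : Fin (n + 1)} {σ : Perm (Fin n)}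
    {g : Fin k → Fin n} : IsOccurrence α (prepend m σ) (Fin.succ ∘ g) ↔ IsOccurrence α σ g := by
  simp [IsOccurrence, StrictMono]

lemma isOccurrence_prepend_cons_iff {α : Perm (Fin k)} {m : Fin (n + 1)} {σ : Perm (Fin n)}
    {g : Fin k → Fin n} :
    IsOccurrence (prepend 0 α) (prepend m σ) (Fin.cons 0 (Fin.succ ∘ g)) ↔
      IsOccurrence α σ g ∧ ∀ a, m ≤ (σ (g a) : ℕ) := by
  have hmono : StrictMono (Fin.cons 0 (Fin.succ ∘ g) : Fin (k + 1) → Fin (n + 1)) ↔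
      StrictMono g := by
    rw [Fin.strictMono_cons]
    simp [StrictMono]
  have hlt (i : Fin n) : m < m.succAbove i ↔ (m : ℕ) ≤ i := Fin.lt_succAbove_iff_le_castSucc ..
  have hle (i : Fin n) : m ≤ m.succAbove i ↔ (m : ℕ) ≤ i :=
    (Fin.succAbove_ne m i).symm.le_iff_lt.trans (hlt i)
  simp only [IsOccurrence, hmono, Fin.forall_fin_succ, Fin.cons_zero, Fin.cons_succ, comp_apply,
    prepend_zero, prepend_succ, Fin.zero_succAbove, Fin.succ_lt_succ_iff, Fin.succ_pos,
    Fin.not_lt_zero, Fin.succAbove_lt_succAbove_iff, hlt, not_lt, hle, true_iff, false_iff,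
    forall_and, le_refl, true_and]
  tauto

lemma eq_succ_comp_or_eq_cons_of_strictMono {f : Fin (k + 1) → Fin (n + 1)} (hf : StrictMono f) :
    (∃ g, f = Fin.succ ∘ g) ∨ ∃ g, f = Fin.cons 0 (Fin.succ ∘ g) := by
  have exists_eq_succ_comp {l : ℕ} {h : Fin l → Fin (n + 1)} (hh : ∀ a, h a ≠ 0) :
      ∃ g, h = Fin.succ ∘ g := ⟨fun a => (h a).pred (hh a), by ext; simp⟩
  by_cases h0 : f 0 = 0
  · obtain ⟨g, hg⟩ := exists_eq_succ_comp (h := Fin.tail f) fun a =>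
      ((Fin.zero_le _).trans_lt (hf a.succ_pos)).ne'
    exact .inr ⟨g, by rw [← hg, ← h0, Fin.cons_self_tail]⟩
  · exact .inl <| exists_eq_succ_comp fun a =>
      ((Fin.pos_of_ne_zero h0).trans_le (hf.monotone (Fin.zero_le a))).ne'

lemma occCount_prepend (α : Perm (Fin k)) (m : Fin (n + 1)) (σ : Perm (Fin n)) :
    occCount (prepend 0 α) (prepend m σ) =
      occCount (prepend 0 α) σ + occCountAbove m α σ := by
  let extend : {g // IsOccurrence (prepend 0 α) σ g} ⊕
      {g // IsOccurrence α σ g ∧ ∀ a, (m : ℕ) ≤ (σ (g a) : ℕ)} →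
      {f // IsOccurrence (prepend 0 α) (prepend m σ) f} :=
    Sum.elim (fun g => ⟨Fin.succ ∘ g.1, isOccurrence_prepend_succ_comp_iff.2 g.2⟩)
      (fun g => ⟨Fin.cons 0 (Fin.succ ∘ g.1), isOccurrence_prepend_cons_iff.2 g.2⟩)
  have extend_injective : Injective extend := by
    refine Injective.sumElim (fun g g' h => ?_) (fun g g' h => ?_) fun g g' h => ?_
    · exact Subtype.ext <| (Fin.succ_injective n).comp_left (congrArg Subtype.val h)
    · exact Subtype.ext <| (Fin.succ_injective n).comp_left
        (Fin.cons_right_injective (α := fun _ => Fin (n + 1)) 0 (congrArg Subtype.val h))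
    · exact Fin.succ_ne_zero _ (congrFun (congrArg Subtype.val h) 0)
  have extend_surjective : Surjective extend := by
    rintro ⟨f, hf⟩
    obtain ⟨g, rfl⟩ | ⟨g, rfl⟩ := eq_succ_comp_or_eq_cons_of_strictMono hf.1
    · exact ⟨.inl ⟨g, isOccurrence_prepend_succ_comp_iff.1 hf⟩, rfl⟩
    · exact ⟨.inr ⟨g, isOccurrence_prepend_cons_iff.1 hf⟩, rfl⟩
  exact (Nat.card_congr (.ofBijective extend ⟨extend_injective, extend_surjective⟩)).symm.trans
    Nat.card_sum

end Prepend

/-! ### Counting for patterns `1 ⊕ α` with `α` of length two -/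

section Counting

variable {n : ℕ} {α β : Perm (Fin 2)}

/-- `s_n({α,β};∅)`: the number of permutations of `{1,…,n}` that avoid both `α` and `β`. -/
noncomputable def sAvoidBoth (α β : Perm (Fin 3)) (n : ℕ) : ℕ :=
  Nat.card {π : Perm (Fin n) // avoids α π ∧ avoids β π}

lemma occCount_eq_zero_of_lt {k : ℕ} (h : n < k) (α : Perm (Fin k)) (π : Perm (Fin n)) :
    occCount α π = 0 := by
  have : IsEmpty {f // IsOccurrence α π f} :=
    ⟨fun f => h.not_ge <| by simpa using Fintype.card_le_of_injective f.1 f.2.1.injective⟩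
  exact Nat.card_of_isEmpty (α := {f // IsOccurrence α π f})

lemma occCountAbove_add_occCountAbove (hαβ : α ≠ β) (m : ℕ) (π : Perm (Fin n)) :
    occCountAbove m α π + occCountAbove m β π = (n - m).choose 2 := by
  have huniv : (Finset.univ : Finset (Perm (Fin 2))) = {α, β} := by
    revert α β; decide
  rw [← sum_occCountAbove (k := 2) m π, huniv, Finset.sum_pair hαβ]

lemma avoids_both_prepend_iff (hαβ : α ≠ β) {m : Fin (n + 1)} {σ : Perm (Fin n)} :
    avoids (prepend 0 α) (prepend m σ) ∧ avoids (prepend 0 β) (prepend m σ) ↔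
      (avoids (prepend 0 α) σ ∧ avoids (prepend 0 β) σ) ∧ n ≤ m + 1 := by
  have hsum := occCountAbove_add_occCountAbove hαβ m σ
  have hzero : (n - m).choose 2 = 0 ↔ n ≤ m + 1 := by
    rw [Nat.choose_eq_zero_iff]; omega
  simp only [avoids, occCount_prepend]
  omega

lemma avoids_containsOnce_prepend_iff (hαβ : α ≠ β) {m : Fin (n + 1)} {σ : Perm (Fin n)} :
    avoids (prepend 0 α) (prepend m σ) ∧ containsOnce (prepend 0 β) (prepend m σ) ↔
      (avoids (prepend 0 α) σ ∧ containsOnce (prepend 0 β) σ) ∧ n ≤ m + 1 ∨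
      (avoids (prepend 0 α) σ ∧ avoids (prepend 0 β) σ ∧ occCountAbove m β σ = 1) ∧
        n = m + 2 := by
  have hsum := occCountAbove_add_occCountAbove hαβ m σ
  have hzero : (n - m).choose 2 = 0 ↔ n ≤ m + 1 := by
    rw [Nat.choose_eq_zero_iff]; omega
  have hone : (n - m).choose 2 = 1 ↔ n = m + 2 := by
    rw [Nat.choose_eq_one_iff]; omega
  simp only [avoids, containsOnce, occCount_prepend]
  omega

lemma sAvoidBoth_prepend_zero_add_two (hαβ : α ≠ β) (n : ℕ) :
    sAvoidBoth (prepend 0 α) (prepend 0 β) (n + 2) =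
      2 * sAvoidBoth (prepend 0 α) (prepend 0 β) (n + 1) := by
  have hsmall (i : Fin n) : ¬ n ≤ i := i.is_lt.not_ge
  rw [sAvoidBoth, card_subtype_perm_succ]
  simp only [avoids_both_prepend_iff hαβ, Fin.sum_univ_castSucc]
  simp [hsmall, two_mul, sAvoidBoth]

lemma sAvoidBoth_prepend_zero_eq_two_pow (hαβ : α ≠ β) (n : ℕ) :
    sAvoidBoth (prepend 0 α) (prepend 0 β) (n + 1) = 2 ^ n := by
  induction n with
  | zero => simp [sAvoidBoth, avoids, occCount_eq_zero_of_lt]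
  | succ n ih => rw [sAvoidBoth_prepend_zero_add_two hαβ, ih, pow_succ']

lemma apply_zero_eq_of_occCountAbove_ne_zero {π : Perm (Fin (n + 2))} (h0 : n ≤ (π 0 : ℕ))
    (h : occCountAbove n β π ≠ 0) : (π 0 : ℕ) = n + β 0 := by
  obtain ⟨⟨f, ⟨hf, hβ⟩, hn⟩⟩ := (Nat.card_ne_zero.1 h).1
  have hβ_ne : β 0 ≠ β 1 := β.injective.ne (by decide)
  have hletter : (π (f 0) : ℕ) = n + β 0 ∧ (π (f 1) : ℕ) = n + β 1 := by
    have h01 := hβ 0 1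
    have h10 := hβ 1 0
    have hn0 := hn 0
    have hn1 := hn 1
    omega
  have hne : π 0 ≠ π (f 1) := π.injective.ne (Fin.zero_le _ |>.trans_lt (hf Fin.zero_lt_one)).ne
  omega

lemma occCountAbove_eq_one_iff {π : Perm (Fin (n + 2))} (h0 : n ≤ (π 0 : ℕ)) :
    occCountAbove n β π = 1 ↔ (π 0 : ℕ) = n + β 0 := by
  obtain ⟨α, hαβ, hα⟩ : ∃ α, α ≠ β ∧ α 0 ≠ β 0 := by
    revert β; decide
  have hsum := occCountAbove_add_occCountAbove hαβ n π
  rw [Nat.add_sub_cancel_left, Nat.choose_self] at hsum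
  refine ⟨fun h => apply_zero_eq_of_occCountAbove_ne_zero h0 (by omega), fun h => ?_⟩
  by_contra hβ
  have := apply_zero_eq_of_occCountAbove_ne_zero (β := α) h0 (by omega)
  omega

lemma card_avoids_both_occCountAbove_eq_one (hαβ : α ≠ β) (n : ℕ) :
    Nat.card {π : Perm (Fin (n + 2)) // avoids (prepend 0 α) π ∧ avoids (prepend 0 β) π ∧
      occCountAbove n β π = 1} = sAvoidBoth (prepend 0 α) (prepend 0 β) (n + 1) := by
  have hprepend (m : Fin (n + 2)) (σ : Perm (Fin (n + 1))) :
      (avoids (prepend 0 α) (prepend m σ) ∧ avoids (prepend 0 β) (prepend m σ) ∧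
        occCountAbove n β (prepend m σ) = 1) ↔
      (avoids (prepend 0 α) σ ∧ avoids (prepend 0 β) σ) ∧ m = Fin.natAdd n (β 0) := by
    rw [← and_assoc, avoids_both_prepend_iff hαβ, and_assoc, Fin.ext_iff, Fin.val_natAdd]
    refine and_congr_right fun _ => ⟨fun ⟨hm, h⟩ => ?_, fun h => ?_⟩
    · simpa using (occCountAbove_eq_one_iff (by simpa using hm)).1 h
    · exact ⟨by omega, (occCountAbove_eq_one_iff (by simp [h])).2 (by simpa using h)⟩
  rw [card_subtype_perm_succ]
  simp only [hprepend]
  rw [Finset.sum_eq_single (Fin.natAdd n (β 0))] <;> simp +contextual [sAvoidBoth]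

lemma sAvoidContain_prepend_zero_add_three (hαβ : α ≠ β) (n : ℕ) :
    sAvoidContain (prepend 0 α) (prepend 0 β) (n + 3) =
      sAvoidBoth (prepend 0 α) (prepend 0 β) (n + 1) +
        2 * sAvoidContain (prepend 0 α) (prepend 0 β) (n + 2) := by
  have hsmall (i : Fin n) : ¬ n + 1 ≤ i ∧ n ≠ i := by omega
  rw [sAvoidContain, card_subtype_perm_succ, ← card_avoids_both_occCountAbove_eq_one hαβ]
  simp only [avoids_containsOnce_prepend_iff hαβ, Fin.sum_univ_castSucc]
  simp [hsmall, sAvoidContain, two_mul, add_assoc]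

lemma sAvoidContain_prepend_zero_eq (hαβ : α ≠ β) (n : ℕ) :
    sAvoidContain (prepend 0 α) (prepend 0 β) (n + 3) = (n + 1) * 2 ^ n := by
  induction n with
  | zero =>
    rw [sAvoidContain_prepend_zero_add_three hαβ, sAvoidBoth_prepend_zero_eq_two_pow hαβ]
    simp [sAvoidContain, containsOnce, occCount_eq_zero_of_lt]
  | succ n ih =>
    rw [sAvoidContain_prepend_zero_add_three hαβ, ih, sAvoidBoth_prepend_zero_eq_two_pow hαβ]
    ring

end Counting

lemma p123_eq_prepend : p123 = prepend 0 1 := by decide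

lemma p132_eq_prepend : p132 = prepend 0 (swap 0 1) := by decide

lemma p123_eq_revPerm_mul_mul_revPerm : p123 = Fin.revPerm * (p123 * Fin.revPerm) := by decide

lemma p213_eq_revPerm_mul_mul_revPerm : p213 = Fin.revPerm * (p132 * Fin.revPerm) := by decide

lemma p231_eq_mul_revPerm : p231 = p132 * Fin.revPerm := by decide

lemma p312_eq_revPerm_mul : p312 = Fin.revPerm * p132 := by decide

lemma p321_eq_mul_revPerm : p321 = p123 * Fin.revPerm := by decide

lemma p321_eq_revPerm_mul : p321 = Fin.revPerm * p123 := by decide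

lemma sAvoidContain_p123_p132 (n : ℕ) : sAvoidContain p123 p132 (n + 3) = (n + 1) * 2 ^ n := by
  rw [p123_eq_prepend, p132_eq_prepend]
  exact sAvoidContain_prepend_zero_eq (by decide) n

lemma sAvoidContain_p132_p123 (n : ℕ) : sAvoidContain p132 p123 (n + 3) = (n + 1) * 2 ^ n := by
  rw [p123_eq_prepend, p132_eq_prepend]
  exact sAvoidContain_prepend_zero_eq (by decide) n

/-- Theorem 4.1: for each listed pair `(α,β)`, `s_n(α;β) = (n−2)·2^{n−3}` for `n ≥ 3`. -/
theorem sAvoidContain_eq_of_mem_classB :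
    ∀ p ∈ [(p123, p132), (p123, p213), (p132, p123), (p213, p123),
           (p231, p321), (p312, p321), (p321, p231), (p321, p312)],
      ∀ n : ℕ, 3 ≤ n → sAvoidContain p.1 p.2 n = (n - 2) * 2 ^ (n - 3) := by
  intro p hp n hn
  obtain ⟨n, rfl⟩ := Nat.exists_eq_add_of_le' hn
  rw [Nat.add_sub_cancel, show n + 3 - 2 = n + 1 by omega]
  have h := sAvoidContain_p123_p132 n
  have h' := sAvoidContain_p132_p123 n
  simp only [List.mem_cons, List.not_mem_nil, or_false] at hp
  rcases hp with rfl | rfl | rfl | rfl | rfl | rfl | rfl | rfl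
  · exact h
  · rwa [p123_eq_revPerm_mul_mul_revPerm, p213_eq_revPerm_mul_mul_revPerm,
      sAvoidContain_revPerm_mul, sAvoidContain_mul_revPerm]
  · exact h'
  · rwa [p123_eq_revPerm_mul_mul_revPerm, p213_eq_revPerm_mul_mul_revPerm,
      sAvoidContain_revPerm_mul, sAvoidContain_mul_revPerm]
  · rwa [p321_eq_mul_revPerm, p231_eq_mul_revPerm, sAvoidContain_mul_revPerm]
  · rwa [p321_eq_revPerm_mul, p312_eq_revPerm_mul, sAvoidContain_revPerm_mul]
  · rwa [p321_eq_mul_revPerm, p231_eq_mul_revPerm, sAvoidContain_mul_revPerm]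
  · rwa [p321_eq_revPerm_mul, p312_eq_revPerm_mul, sAvoidContain_revPerm_mul]
end

section
/- For each ordered pair (α,β) in {(132,213), (213,132), (231,312), (312,231)} of patterns of length three, the number of permutations of {1,…,n} that avoid α and contain β exactly once satisfies s_n(α;β) = n·2^{n−5} for all n ≥ 4 (equivalently, 2^5·s_n(α;β) = n·2^n for n ≥ 4), and s_3(α;β) = 1. -/
/-!
Let `p` be the first letter of a permutation that avoids `132` and contains `213` at most once, and
let `σ` be what remains after deleting it. If `p` starts no occurrence of `213`, then `p` is either
the largest letter or the predecessor in value of the letter that follows it, and in the second case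
`p` starts an occurrence of `213` exactly when the first letter of `σ` does. If `p` starts the sole
occurrence of `213`, then the word is `(n-1)(n-2)n` followed by a permutation of `{1,…,n-3}`
avoiding both patterns. Write `b_n` for the number of permutations avoiding both patterns and
`d_n` for the number avoiding `132` whose sole `213` does not start at the first letter. Then
`b_{n+1} = 2 b_n`, `s_n(132;213) = d_n + b_{n-3}` and `d_{n+1} = s_n(132;213) + d_n`. Reversal and
complementation carry `(132,213)` to the other three pairs.
-/

namespace PatternOcc

open Equiv

section Occurrences

variable {k n : ℕ}

/-- The occurrences of the pattern `α` in `π`, each recorded as its increasing choice of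
indices. -/
def occurrences (α : Perm (Fin k)) (π : Perm (Fin n)) : Set (Fin k → Fin n) :=
  {f | StrictMono f ∧ ∀ a b : Fin k, α a < α b ↔ π (f a) < π (f b)}

lemma occCount_eq_ncard (α : Perm (Fin k)) (π : Perm (Fin n)) :
    occCount α π = (occurrences α π).ncard :=
  rfl

lemma avoids_iff_forall_notMem {α : Perm (Fin k)} {π : Perm (Fin n)} :
    avoids α π ↔ ∀ f, f ∉ occurrences α π := by
  rw [avoids, occCount_eq_ncard, Set.ncard_eq_zero, Set.eq_empty_iff_forall_notMem]

lemma occCount_eq_zero_of_lt (α : Perm (Fin k)) (π : Perm (Fin n)) (h : n < k) :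
    occCount α π = 0 :=
  avoids_iff_forall_notMem.2 fun f hf => by
    simpa [h.not_ge] using Fintype.card_le_of_injective f hf.1.injective

lemma strictMono_fin_three {f : Fin 3 → Fin n} : StrictMono f ↔ f 0 < f 1 ∧ f 1 < f 2 := by
  simp [Fin.strictMono_iff_lt_succ, Fin.forall_fin_succ]

lemma mem_occurrences_iff_strictMono {α : Perm (Fin k)} {π : Perm (Fin n)} {f : Fin k → Fin n} :
    f ∈ occurrences α π ↔ StrictMono f ∧ StrictMono fun c => π (f (α.symm c)) := by
  refine and_congr_right fun _ => ⟨fun h c d hcd => ?_, fun h a b => ?_⟩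
  · simpa [hcd] using h (α.symm c) (α.symm d)
  · simpa using h.lt_iff_lt (a := α a) (b := α b) |>.symm

lemma mem_occurrences_p132 {π : Perm (Fin n)} {f : Fin 3 → Fin n} :
    f ∈ occurrences p132 π ↔
      f 0 < f 1 ∧ f 1 < f 2 ∧ π (f 0) < π (f 2) ∧ π (f 2) < π (f 1) := by
  simp [mem_occurrences_iff_strictMono, strictMono_fin_three, p132, and_assoc]

lemma mem_occurrences_p213 {π : Perm (Fin n)} {f : Fin 3 → Fin n} :
    f ∈ occurrences p213 π ↔
      f 0 < f 1 ∧ f 1 < f 2 ∧ π (f 1) < π (f 0) ∧ π (f 0) < π (f 2) := by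
  simp [mem_occurrences_iff_strictMono, strictMono_fin_three, p213, and_assoc]

lemma avoids_p132_iff {π : Perm (Fin n)} :
    avoids p132 π ↔ ∀ i j l, i < j → j < l → π i < π l → ¬ π l < π j := by
  simp only [avoids_iff_forall_notMem, mem_occurrences_p132]
  exact ⟨fun h i j l hij hjl hil hlj => h ![i, j, l] ⟨hij, hjl, hil, hlj⟩,
    fun h f hf => h _ _ _ hf.1 hf.2.1 hf.2.2.1 hf.2.2.2⟩

lemma avoids_p213_iff {π : Perm (Fin n)} :
    avoids p213 π ↔ ∀ i j l, i < j → j < l → π j < π i → ¬ π i < π l := by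
  simp only [avoids_iff_forall_notMem, mem_occurrences_p213]
  exact ⟨fun h i j l hij hjl hji hil => h ![i, j, l] ⟨hij, hjl, hji, hil⟩,
    fun h f hf => h _ _ _ hf.1 hf.2.1 hf.2.2.1 hf.2.2.2⟩

end Occurrences

section Symmetry

variable {k n : ℕ}

lemma occCount_revPerm_mul (α : Perm (Fin k)) (π : Perm (Fin n)) :
    occCount (Fin.revPerm * α) (Fin.revPerm * π) = occCount α π := by
  refine Nat.card_congr (subtypeEquivRight fun f => and_congr_right fun _ => ?_)
  simp only [Perm.mul_apply, Fin.revPerm_apply, Fin.rev_lt_rev]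
  exact forall_comm

lemma occCount_mul_revPerm (α : Perm (Fin k)) (π : Perm (Fin n)) :
    occCount (α * Fin.revPerm) (π * Fin.revPerm) = occCount α π := by
  refine Nat.card_congr ((arrowCongr Fin.revPerm Fin.revPerm).subtypeEquiv fun f => ?_)
  refine and_congr ?_ ?_
  · have rev_strictMono : ∀ g : Fin k → Fin n,
        StrictMono g → StrictMono fun a : Fin k => (g a.rev).rev :=
      fun g hg a b hab => Fin.rev_lt_rev.2 (hg (Fin.rev_lt_rev.2 hab))
    exact ⟨rev_strictMono f, fun h => by simpa using rev_strictMono _ h⟩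
  · rw [← Fin.revPerm.forall_congr_right]
    refine forall_congr' fun a => ?_
    rw [← Fin.revPerm.forall_congr_right]
    simp

variable (α β : Perm (Fin 3)) (n : ℕ)

lemma sAvoidContain_revPerm_mul :
    sAvoidContain (Fin.revPerm * α) (Fin.revPerm * β) n = sAvoidContain α β n :=
  (Nat.card_congr ((Equiv.mulLeft Fin.revPerm).subtypeEquiv fun π => by
    simp only [avoids, containsOnce, coe_mulLeft, occCount_revPerm_mul])).symm

lemma sAvoidContain_mul_revPerm :
    sAvoidContain (α * Fin.revPerm) (β * Fin.revPerm) n = sAvoidContain α β n :=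
  (Nat.card_congr ((Equiv.mulRight Fin.revPerm).subtypeEquiv fun π => by
    simp only [avoids, containsOnce, coe_mulRight, occCount_mul_revPerm])).symm

end Symmetry

section Prepend

variable {k n : ℕ}

/-- The permutation whose word has first letter `p` followed by a word order-isomorphic to that
of `σ`: the letters of `σ` that are at least `p` are raised by one. -/
def prepend (p : Fin (n + 1)) (σ : Perm (Fin n)) : Perm (Fin (n + 1)) :=
  (finSuccEquiv n).trans (σ.optionCongr.trans (finSuccEquiv' p).symm)

@[simp] lemma prepend_zero (p : Fin (n + 1)) (σ : Perm (Fin n)) : prepend p σ 0 = p := by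
  simp [prepend]

@[simp] lemma prepend_succ (p : Fin (n + 1)) (σ : Perm (Fin n)) (i : Fin n) :
    prepend p σ i.succ = p.succAbove (σ i) := by
  simp [prepend]

lemma prepend_inj {p q : Fin (n + 1)} {σ τ : Perm (Fin n)} :
    prepend p σ = prepend q τ ↔ p = q ∧ σ = τ := by
  refine ⟨fun h => ?_, by rintro ⟨rfl, rfl⟩; rfl⟩
  obtain rfl : p = q := by simpa using DFunLike.congr_fun h 0
  exact ⟨rfl, Equiv.ext fun i => by simpa using DFunLike.congr_fun h i.succ⟩

lemma exists_prepend_eq (π : Perm (Fin (n + 1))) : ∃ p σ, prepend p σ = π := by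
  have injective : Function.Injective fun x : Fin (n + 1) × Perm (Fin n) => prepend x.1 x.2 :=
    fun x y h => Prod.ext_iff.2 (prepend_inj.1 h)
  have bijective := (Fintype.bijective_iff_injective_and_card _).2
    ⟨injective, by simp [Fintype.card_perm, Nat.factorial_succ]⟩
  obtain ⟨⟨p, σ⟩, h⟩ := bijective.surjective π
  exact ⟨p, σ, h⟩

lemma ncard_eq_of_prepend_mem_iff {S : Set (Perm (Fin (n + 1)))} {T : Set (Perm (Fin n))}
    (f : Perm (Fin n) → Fin (n + 1)) (h : ∀ p σ, prepend p σ ∈ S ↔ p = f σ ∧ σ ∈ T) :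
    S.ncard = T.ncard := by
  have image_eq : S = (fun σ => prepend (f σ) σ) '' T := by
    ext π
    obtain ⟨p, σ, rfl⟩ := exists_prepend_eq π
    simp only [h, Set.mem_image, prepend_inj]
    grind
  rw [image_eq, Set.ncard_image_of_injective _ fun σ τ hστ => (prepend_inj.1 hστ).2]

/-- The occurrences of `α` in `prepend p σ` that use the first letter, each recorded by its
remaining indices, as positions in `σ`. -/
def headOccurrences (α : Perm (Fin (k + 1))) (p : Fin (n + 1)) (σ : Perm (Fin n)) :
    Set (Fin k → Fin n) :=
  {g | (Fin.cons 0 (Fin.succ ∘ g) : Fin (k + 1) → Fin (n + 1)) ∈ occurrences α (prepend p σ)}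

lemma succ_comp_mem_occurrences_prepend {α : Perm (Fin k)} {p : Fin (n + 1)} {σ : Perm (Fin n)}
    {g : Fin k → Fin n} :
    Fin.succ ∘ g ∈ occurrences α (prepend p σ) ↔ g ∈ occurrences α σ := by
  simp [occurrences, StrictMono]

lemma exists_eq_succ_comp {f : Fin k → Fin (n + 1)} (hf : ∀ a, f a ≠ 0) :
    ∃ g : Fin k → Fin n, f = Fin.succ ∘ g := by
  choose g hg using fun a => Fin.exists_succ_eq.2 (hf a)
  exact ⟨g, funext fun a => (hg a).symm⟩

lemma occurrences_prepend (α : Perm (Fin (k + 1))) (p : Fin (n + 1)) (σ : Perm (Fin n)) :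
    occurrences α (prepend p σ) = (Fin.succ ∘ ·) '' occurrences α σ ∪
      (fun g => Fin.cons 0 (Fin.succ ∘ g)) '' headOccurrences α p σ := by
  ext f
  constructor
  · intro hf
    by_cases hf0 : f 0 = 0
    · obtain ⟨g, hg⟩ := exists_eq_succ_comp (f := Fin.tail f) fun a =>
        (Fin.zero_le (f 0)).trans_lt (hf.1 a.succ_pos) |>.ne'
      obtain rfl : f = Fin.cons 0 (Fin.succ ∘ g) := by rw [← hg, ← hf0, Fin.cons_self_tail]
      exact Or.inr ⟨g, hf, rfl⟩
    · obtain ⟨g, rfl⟩ := exists_eq_succ_comp (f := f) fun a =>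
        ((Fin.pos_iff_ne_zero.2 hf0).trans_le (hf.1.monotone a.zero_le)).ne'
      exact Or.inl ⟨g, succ_comp_mem_occurrences_prepend.1 hf, rfl⟩
  · rintro (⟨g, hg, rfl⟩ | ⟨g, hg, rfl⟩)
    · exact succ_comp_mem_occurrences_prepend.2 hg
    · exact hg

lemma occCount_prepend (α : Perm (Fin (k + 1))) (p : Fin (n + 1)) (σ : Perm (Fin n)) :
    occCount α (prepend p σ) = occCount α σ + (headOccurrences α p σ).ncard := by
  have succ_injective : Function.Injective fun g : Fin (k + 1) → Fin n => Fin.succ ∘ g :=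
    (Fin.succ_injective n).comp_left
  have cons_injective : Function.Injective fun g : Fin k → Fin n =>
      (Fin.cons 0 (Fin.succ ∘ g) : Fin (k + 1) → Fin (n + 1)) :=
    (Fin.cons_right_injective _).comp (Fin.succ_injective n).comp_left
  have disjoint : Disjoint ((Fin.succ ∘ ·) '' occurrences α σ)
      ((fun g => Fin.cons 0 (Fin.succ ∘ g)) '' headOccurrences α p σ) := by
    rw [Set.disjoint_left]
    rintro _ ⟨g, -, rfl⟩ ⟨g', -, h⟩
    exact Fin.succ_ne_zero _ (congrFun h 0).symm
  rw [occCount_eq_ncard, occurrences_prepend, Set.ncard_union_eq disjoint,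
    Set.ncard_image_of_injective _ succ_injective, Set.ncard_image_of_injective _ cons_injective,
    occCount_eq_ncard]

lemma avoids_prepend {α : Perm (Fin (k + 1))} {p : Fin (n + 1)} {σ : Perm (Fin n)} :
    avoids α (prepend p σ) ↔ avoids α σ ∧ headOccurrences α p σ = ∅ := by
  rw [avoids, avoids, occCount_prepend, Nat.add_eq_zero_iff, Set.ncard_eq_zero]

lemma headOccurrences_last {α : Perm (Fin (k + 1))} (hα : ∃ a, α 0 < α a) (σ : Perm (Fin n)) :
    headOccurrences α (Fin.last n) σ = ∅ := by
  obtain ⟨a, ha⟩ := hα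
  refine Set.eq_empty_of_forall_notMem fun g hg => ?_
  simpa [Fin.not_lt.2 (Fin.le_last _)] using (hg.2 0 a).1 ha

lemma mem_headOccurrences_p132 {p : Fin (n + 1)} {σ : Perm (Fin n)} {g : Fin 2 → Fin n} :
    g ∈ headOccurrences p132 p σ ↔
      g 0 < g 1 ∧ p ≤ (σ (g 1)).castSucc ∧ σ (g 1) < σ (g 0) := by
  have cons_two : (Fin.cons 0 (Fin.succ ∘ g) : Fin 3 → Fin (n + 1)) 2 = (g 1).succ := rfl
  simp [headOccurrences, mem_occurrences_p132, cons_two, Fin.lt_succAbove_iff_le_castSucc]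

lemma mem_headOccurrences_p213 {p : Fin (n + 1)} {σ : Perm (Fin n)} {g : Fin 2 → Fin n} :
    g ∈ headOccurrences p213 p σ ↔
      g 0 < g 1 ∧ (σ (g 0)).castSucc < p ∧ p ≤ (σ (g 1)).castSucc := by
  have cons_two : (Fin.cons 0 (Fin.succ ∘ g) : Fin 3 → Fin (n + 1)) 2 = (g 1).succ := rfl
  simp [headOccurrences, mem_occurrences_p213, cons_two, Fin.lt_succAbove_iff_le_castSucc,
    Fin.succAbove_lt_iff_castSucc_lt]

lemma headOccurrences_p132_eq_empty_iff {p : Fin (n + 1)} {σ : Perm (Fin n)} :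
    headOccurrences p132 p σ = ∅ ↔ ∀ i j, i < j → p ≤ (σ j).castSucc → ¬ σ j < σ i := by
  simp only [Set.eq_empty_iff_forall_notMem, mem_headOccurrences_p132]
  exact ⟨fun h i j hij hpj hji => h ![i, j] ⟨hij, hpj, hji⟩,
    fun h g hg => h _ _ hg.1 hg.2.1 hg.2.2⟩

lemma headOccurrences_p213_eq_empty_iff {p : Fin (n + 1)} {σ : Perm (Fin n)} :
    headOccurrences p213 p σ = ∅ ↔
      ∀ i j, i < j → (σ i).castSucc < p → ¬ p ≤ (σ j).castSucc := by
  simp only [Set.eq_empty_iff_forall_notMem, mem_headOccurrences_p213]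
  exact ⟨fun h i j hij hip hpj => h ![i, j] ⟨hij, hip, hpj⟩,
    fun h g hg => h _ _ hg.1 hg.2.1 hg.2.2⟩

lemma ncard_headOccurrences_p213_eq_one_iff {p : Fin (n + 1)} {σ : Perm (Fin n)} :
    (headOccurrences p213 p σ).ncard = 1 ↔
      ∃ i j, (i < j ∧ (σ i).castSucc < p ∧ p ≤ (σ j).castSucc) ∧
        ∀ i' j', i' < j' → (σ i').castSucc < p → p ≤ (σ j').castSucc → i' = i ∧ j' = j := by
  rw [Set.ncard_eq_one]
  constructor
  · rintro ⟨g, hg⟩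
    refine ⟨g 0, g 1, mem_headOccurrences_p213.1 (hg ▸ rfl), fun i j hij hip hpj => ?_⟩
    have eq_g : ![i, j] = g := by
      rw [← Set.mem_singleton_iff, ← hg]
      exact mem_headOccurrences_p213.2 ⟨hij, hip, hpj⟩
    exact ⟨congrFun eq_g 0, congrFun eq_g 1⟩
  · rintro ⟨i, j, hij, unique⟩
    refine ⟨![i, j], Set.eq_singleton_iff_unique_mem.2
      ⟨mem_headOccurrences_p213.2 hij, fun g hg => ?_⟩⟩
    obtain ⟨h0, h1, h2⟩ := mem_headOccurrences_p213.1 hg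
    obtain ⟨h0, h1⟩ := unique _ _ h0 h1 h2
    ext a
    fin_cases a <;> simp [h0, h1]

end Prepend

section Level

/-- The permutations of `Fin n` that avoid `132` and contain `213` exactly `m` times. For `m = 0`
and `m = 1` these are the two families whose sizes enter the recurrence. -/
def level (n m : ℕ) : Set (Perm (Fin n)) :=
  {π | avoids p132 π ∧ occCount p213 π = m}

/-- The permutations in which the first letter is the `2` of an occurrence of `213`.
The condition `0 < i` is implied by `π i < π 0`. -/
def initial213 (n : ℕ) : Set (Perm (Fin (n + 1))) :=
  {π | ∃ i j, i < j ∧ π i < π 0 ∧ π 0 < π j}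

variable {n m : ℕ}

lemma level_zero_eq_univ (hn : n < 3) : level n 0 = Set.univ :=
  Set.eq_univ_of_forall fun π =>
    ⟨occCount_eq_zero_of_lt p132 π hn, occCount_eq_zero_of_lt p213 π hn⟩

lemma level_one_eq_empty (hn : n < 3) : level n 1 = ∅ :=
  Set.eq_empty_of_forall_notMem fun π hπ => by
    simpa [occCount_eq_zero_of_lt p213 π hn] using hπ.2

lemma prepend_mem_level {p : Fin (n + 1)} {σ : Perm (Fin n)} :
    prepend p σ ∈ level (n + 1) m ↔
      (avoids p132 σ ∧ headOccurrences p132 p σ = ∅) ∧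
        occCount p213 σ + (headOccurrences p213 p σ).ncard = m := by
  rw [← avoids_prepend, ← occCount_prepend]
  rfl

lemma prepend_mem_initial213 {p : Fin (n + 1)} {σ : Perm (Fin n)} :
    prepend p σ ∈ initial213 n ↔ (headOccurrences p213 p σ).Nonempty := by
  rw [Set.nonempty_iff_ne_empty, Ne, headOccurrences_p213_eq_empty_iff]
  simp [initial213, Fin.exists_fin_succ, Fin.lt_succAbove_iff_le_castSucc,
    Fin.succAbove_lt_iff_castSucc_lt]

lemma prepend_last_mem_level {σ : Perm (Fin n)} :
    prepend (Fin.last n) σ ∈ level (n + 1) m ↔ σ ∈ level n m := by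
  rw [prepend_mem_level, headOccurrences_last ⟨1, by decide⟩, headOccurrences_last ⟨2, by decide⟩,
    Set.ncard_empty]
  simp [level]

lemma prepend_last_notMem_initial213 {σ : Perm (Fin n)} :
    prepend (Fin.last n) σ ∉ initial213 n := by
  rw [prepend_mem_initial213, headOccurrences_last ⟨2, by decide⟩]
  exact Set.not_nonempty_empty

-- The letters `σ 0` and `σ 0 + 1` at the front of `prepend (σ 0).castSucc σ` are adjacent both in
-- position and in value, so exchanging them carries occurrences through one to the other.
lemma headOccurrences_p132_castSucc {σ : Perm (Fin (n + 1))} (hσ : avoids p132 σ) :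
    headOccurrences p132 (σ 0).castSucc σ = ∅ := by
  refine headOccurrences_p132_eq_empty_iff.2 fun i j hij h0j hji => ?_
  rw [Fin.castSucc_le_castSucc_iff] at h0j
  have hi : 0 < i := Fin.pos_iff_ne_zero.2 fun h => (h0j.trans_lt hji).ne (by rw [h])
  have hlt : σ 0 < σ j := h0j.lt_of_ne (σ.injective.ne (hi.trans hij).ne)
  exact avoids_p132_iff.1 hσ 0 i j hi hij hlt hji

lemma prepend_castSucc_mem_initial213 {σ : Perm (Fin (n + 1))} :
    prepend (σ 0).castSucc σ ∈ initial213 (n + 1) ↔ σ ∈ initial213 n := by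
  rw [prepend_mem_initial213, Set.nonempty_iff_ne_empty, Ne, headOccurrences_p213_eq_empty_iff]
  push Not
  refine exists₂_congr fun i j => and_congr_right fun hij => ?_
  have hj : σ 0 ≠ σ j := σ.injective.ne ((Fin.zero_le i).trans_lt hij).ne
  rw [Fin.castSucc_lt_castSucc_iff, Fin.castSucc_le_castSucc_iff, hj.le_iff_lt]

-- If `p` is not the largest letter, then without new occurrences the letters of `σ` that are at
-- least `p` come first and increase, so `σ` starts with the least of them, which is `p` itself.
lemma eq_last_or_eq_castSucc_of_headOccurrences_eq_empty {p : Fin (n + 2)} {σ : Perm (Fin (n + 1))}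
    (h132 : headOccurrences p132 p σ = ∅) (h213 : headOccurrences p213 p σ = ∅) :
    p = Fin.last (n + 1) ∨ p = (σ 0).castSucc := by
  rw [headOccurrences_p132_eq_empty_iff] at h132
  rw [headOccurrences_p213_eq_empty_iff] at h213
  refine or_iff_not_imp_left.2 fun hp => ?_
  obtain ⟨q, rfl⟩ := Fin.exists_castSucc_eq.2 hp
  obtain ⟨j, rfl⟩ := σ.surjective q
  simp only [Fin.castSucc_lt_castSucc_iff, Fin.castSucc_le_castSucc_iff] at h132 h213
  rcases (Fin.zero_le j).eq_or_lt with rfl | hj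
  · rfl
  have h0j : ¬ σ 0 < σ j := fun h => h213 0 j hj h le_rfl
  have hj0 : ¬ σ j < σ 0 := h132 0 j hj le_rfl
  rw [le_antisymm (not_lt.1 h0j) (not_lt.1 hj0)]

lemma prepend_mem_level_diff_initial213 {p : Fin (n + 2)} {σ : Perm (Fin (n + 1))} :
    prepend p σ ∈ level (n + 2) m \ initial213 (n + 1) ↔
      (p = Fin.last (n + 1) ∧ σ ∈ level (n + 1) m) ∨
        (p = (σ 0).castSucc ∧ σ ∈ level (n + 1) m \ initial213 n) := by
  constructor
  · rintro ⟨hlevel, hinit⟩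
    obtain ⟨⟨hσ, h132⟩, hcount⟩ := prepend_mem_level.1 hlevel
    have h213 : headOccurrences p213 p σ = ∅ :=
      Set.not_nonempty_iff_eq_empty.1 (mt prepend_mem_initial213.2 hinit)
    rw [h213, Set.ncard_empty, add_zero] at hcount
    rcases eq_last_or_eq_castSucc_of_headOccurrences_eq_empty h132 h213 with rfl | rfl
    · exact Or.inl ⟨rfl, hσ, hcount⟩
    · exact Or.inr ⟨rfl, ⟨hσ, hcount⟩, mt prepend_castSucc_mem_initial213.2 hinit⟩
  · rintro (⟨rfl, hσ⟩ | ⟨rfl, hσ, hinit⟩)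
    · exact ⟨prepend_last_mem_level.2 hσ, prepend_last_notMem_initial213⟩
    · have hinit' := mt prepend_castSucc_mem_initial213.1 hinit
      have h213 := Set.not_nonempty_iff_eq_empty.1 (mt prepend_mem_initial213.2 hinit')
      refine ⟨prepend_mem_level.2 ⟨⟨hσ.1, headOccurrences_p132_castSucc hσ.1⟩, ?_⟩, hinit'⟩
      rw [h213, Set.ncard_empty, add_zero, hσ.2]

lemma disjoint_level_zero_initial213 : Disjoint (level (n + 1) 0) (initial213 n) := by
  rw [Set.disjoint_left]
  rintro π hπ ⟨i, j, hij, hi0, h0j⟩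
  have hi : 0 < i := Fin.pos_iff_ne_zero.2 fun h => hi0.ne (by rw [h])
  exact avoids_p213_iff.1 hπ.2 0 i j hi hij hi0 h0j

lemma prepend_mem_level_one_inter_initial213 {p : Fin (n + 1)} {σ : Perm (Fin n)} :
    prepend p σ ∈ level (n + 1) 1 ∩ initial213 n ↔
      σ ∈ level n 0 ∧ headOccurrences p132 p σ = ∅ ∧ (headOccurrences p213 p σ).ncard = 1 := by
  rw [Set.mem_inter_iff, prepend_mem_level, prepend_mem_initial213, ← Set.ncard_pos, level,
    Set.mem_ofPred_eq]
  lia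

lemma castSucc_apply_zero_lt_of_headOccurrences {p : Fin (n + 2)} {σ : Perm (Fin (n + 1))}
    (hσ : avoids p213 σ) (h132 : headOccurrences p132 p σ = ∅) {i j : Fin (n + 1)} (hij : i < j)
    (hip : (σ i).castSucc < p) (hpj : p ≤ (σ j).castSucc) : (σ 0).castSucc < p := by
  by_contra! hp
  have hi0 : σ i < σ 0 := Fin.castSucc_lt_castSucc_iff.1 (hip.trans_le hp)
  have hi : 0 < i := Fin.pos_iff_ne_zero.2 fun h => hi0.ne (by rw [h])
  have h0j : ¬ σ j < σ 0 := headOccurrences_p132_eq_empty_iff.1 h132 0 j (hi.trans hij) hpj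
  have hne : σ 0 ≠ σ j := σ.injective.ne (hi.trans hij).ne
  exact avoids_p213_iff.1 hσ 0 i j hi hij hi0 ((not_lt.1 h0j).lt_of_ne hne)

lemma eq_castSucc_last_of_ncard_headOccurrences_p213 {p : Fin (n + 2)} {σ : Perm (Fin (n + 1))}
    (hσ : avoids p213 σ) (h132 : headOccurrences p132 p σ = ∅)
    (h213 : (headOccurrences p213 p σ).ncard = 1) : p = (Fin.last n).castSucc := by
  obtain ⟨i, j, ⟨hij, hip, hpj⟩, unique⟩ := ncard_headOccurrences_p213_eq_one_iff.1 h213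
  have h0p : (σ 0).castSucc < p := castSucc_apply_zero_lt_of_headOccurrences hσ h132 hij hip hpj
  have eq_j : ∀ a, p ≤ (σ a).castSucc → a = j := fun a ha => by
    have ha0 : 0 < a := Fin.pos_iff_ne_zero.2 fun h => (h0p.trans_le ha).ne (by rw [h])
    exact (unique 0 a ha0 h0p ha).2
  obtain ⟨q, rfl⟩ := Fin.exists_castSucc_eq.2 (hpj.trans_lt (Fin.castSucc_lt_last _)).ne
  obtain ⟨a, rfl⟩ := σ.surjective q
  obtain ⟨l, hl⟩ := σ.surjective (Fin.last n)
  have hal : σ a ≤ σ l := by rw [hl]; exact Fin.le_last _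
  rw [eq_j a le_rfl, ← eq_j l (Fin.castSucc_le_castSucc_iff.2 hal), hl]

lemma lt_castSucc_last_of_ne {a : Fin (n + 2)} (hlast : a ≠ Fin.last (n + 1))
    (hpred : a ≠ (Fin.last n).castSucc) : a < (Fin.last n).castSucc := by
  simp only [ne_eq, Fin.ext_iff, Fin.lt_def, Fin.val_castSucc, Fin.val_last] at *
  lia

lemma apply_zero_eq_castSucc_last_of_ncard_headOccurrences_p213 {σ : Perm (Fin (n + 2))}
    (hσ : avoids p132 σ)
    (h213 : (headOccurrences p213 (Fin.last (n + 1)).castSucc σ).ncard = 1) :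
    σ 0 = (Fin.last n).castSucc := by
  obtain ⟨i, l, ⟨hil, hi, hl⟩, unique⟩ := ncard_headOccurrences_p213_eq_one_iff.1 h213
  simp only [Fin.castSucc_lt_castSucc_iff, Fin.castSucc_le_castSucc_iff, Fin.last_le_iff,
    Fin.lt_last_iff_ne_last] at hi hl unique
  have hl0 : 0 < l := (Fin.zero_le i).trans_lt hil
  have h0 : σ 0 ≠ Fin.last (n + 1) := hl ▸ σ.injective.ne hl0.ne
  obtain ⟨b, hb⟩ := σ.surjective (Fin.last n).castSucc
  have hb_last : σ b ≠ Fin.last (n + 1) := by rw [hb]; exact Fin.castSucc_ne_last _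
  suffices b = 0 by rw [← this, hb]
  by_contra hb0
  rcases lt_trichotomy b l with hbl | rfl | hlb
  · exact hb0 ((unique b l hbl hb_last hl).1.trans (unique 0 l hl0 h0 hl).1.symm)
  · exact hb_last hl
  · have h0b : σ 0 < σ b := hb ▸ lt_castSucc_last_of_ne h0 (hb ▸ σ.injective.ne (Ne.symm hb0))
    have hbl : σ b < σ l := hl ▸ Fin.lt_last_iff_ne_last.2 hb_last
    exact avoids_p132_iff.1 hσ 0 l b hl0 hlb h0b hbl

lemma headOccurrences_p132_castSucc_last (σ : Perm (Fin (n + 1))) :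
    headOccurrences p132 (Fin.last n).castSucc σ = ∅ :=
  headOccurrences_p132_eq_empty_iff.2 fun _ _ _ hj hji =>
    (((Fin.castSucc_le_castSucc_iff.1 hj).trans_lt hji).trans_le (Fin.le_last _)).false

lemma ncard_headOccurrences_p213_castSucc_last {σ : Perm (Fin (n + 2))} (hσ : avoids p213 σ)
    (h0 : σ 0 = (Fin.last n).castSucc) :
    (headOccurrences p213 (Fin.last (n + 1)).castSucc σ).ncard = 1 := by
  have h0_last : σ 0 ≠ Fin.last (n + 1) := by rw [h0]; exact Fin.castSucc_ne_last _
  obtain ⟨l, hl⟩ := σ.surjective (Fin.last (n + 1))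
  have hl0 : 0 < l := Fin.pos_iff_ne_zero.2 (by rintro rfl; exact h0_last hl)
  rw [ncard_headOccurrences_p213_eq_one_iff]
  simp only [Fin.castSucc_lt_castSucc_iff, Fin.castSucc_le_castSucc_iff, Fin.last_le_iff,
    Fin.lt_last_iff_ne_last]
  refine ⟨0, l, ⟨hl0, h0_last, hl⟩, fun i j hij hi hj => ?_⟩
  obtain rfl : j = l := σ.injective (hj.trans hl.symm)
  refine ⟨?_, rfl⟩
  by_contra hi0
  have hi_lt : σ i < σ 0 := h0 ▸ lt_castSucc_last_of_ne hi (h0 ▸ σ.injective.ne hi0)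
  have h0j : σ 0 < σ j := hl ▸ Fin.lt_last_iff_ne_last.2 h0_last
  exact avoids_p213_iff.1 hσ 0 i j (Fin.pos_iff_ne_zero.2 hi0) hij hi_lt h0j

lemma prepend_mem_level_one_inter_initial213_iff_eq_castSucc_last
    {p : Fin (n + 3)} {σ : Perm (Fin (n + 2))} :
    prepend p σ ∈ level (n + 3) 1 ∩ initial213 (n + 2) ↔
      p = (Fin.last (n + 1)).castSucc ∧
        σ ∈ level (n + 2) 0 ∩ {π | π 0 = (Fin.last n).castSucc} := by
  rw [prepend_mem_level_one_inter_initial213]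
  constructor
  · rintro ⟨hσ, h132, h213⟩
    obtain rfl := eq_castSucc_last_of_ncard_headOccurrences_p213 hσ.2 h132 h213
    exact ⟨rfl, hσ, apply_zero_eq_castSucc_last_of_ncard_headOccurrences_p213 hσ.1 h213⟩
  · rintro ⟨rfl, hσ, h0⟩
    exact ⟨hσ, headOccurrences_p132_castSucc_last σ,
      ncard_headOccurrences_p213_castSucc_last hσ.2 h0⟩

end Level

section Counting

variable (n m : ℕ)

lemma ncard_level_inter_add_ncard_level_diff_initial213 :
    (level (n + 1) m ∩ initial213 n).ncard + (level (n + 1) m \ initial213 n).ncard =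
      (level (n + 1) m).ncard :=
  Set.ncard_inter_add_ncard_sdiff_eq_ncard _ _

lemma ncard_level_diff_initial213_succ :
    (level (n + 2) m \ initial213 (n + 1)).ncard =
      (level (n + 1) m).ncard + (level (n + 1) m \ initial213 n).ncard := by
  have castSucc_ne_last (σ : Perm (Fin (n + 1))) : (σ 0).castSucc ≠ Fin.last (n + 1) :=
    Fin.castSucc_ne_last _
  rw [← Set.ncard_inter_add_ncard_sdiff_eq_ncard _ {π : Perm (Fin (n + 2)) | π 0 = Fin.last _}]
  congr 1
  · refine ncard_eq_of_prepend_mem_iff (fun _ => Fin.last _) fun p σ => ?_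
    simp only [Set.mem_inter_iff, prepend_mem_level_diff_initial213, Set.mem_ofPred_eq,
      prepend_zero]
    grind
  · refine ncard_eq_of_prepend_mem_iff (fun σ => (σ 0).castSucc) fun p σ => ?_
    simp only [Set.mem_sdiff (s := _ \ _), prepend_mem_level_diff_initial213, Set.mem_ofPred_eq,
      prepend_zero]
    grind

lemma ncard_level_zero_succ : (level (n + 1) 0).ncard = 2 ^ n := by
  induction n with
  | zero => simp [level_zero_eq_univ]
  | succ n ih =>
    have h := ncard_level_diff_initial213_succ n 0
    rw [disjoint_level_zero_initial213.sdiff_eq_left,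
      disjoint_level_zero_initial213.sdiff_eq_left, ih] at h
    rw [h, pow_succ, mul_two]

lemma ncard_level_inter_apply_zero_eq_last :
    (level (n + 1) m ∩ {π | π 0 = Fin.last n}).ncard = (level n m).ncard :=
  ncard_eq_of_prepend_mem_iff (fun _ => Fin.last n) fun p σ => by
    rw [Set.mem_inter_iff, Set.mem_ofPred_eq, prepend_zero, and_comm]
    refine and_congr_right ?_
    rintro rfl
    exact prepend_last_mem_level

lemma ncard_level_zero_inter_apply_zero_eq_castSucc_last :
    (level (n + 2) 0 ∩ {π | π 0 = (Fin.last n).castSucc}).ncard = (level n 0).ncard := by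
  rw [← ncard_level_inter_apply_zero_eq_last n 0]
  refine ncard_eq_of_prepend_mem_iff (fun _ => (Fin.last n).castSucc) fun p σ => ?_
  have hdiff := disjoint_level_zero_initial213 (n := n).sdiff_eq_left
  have hdiff' := disjoint_level_zero_initial213 (n := n + 1).sdiff_eq_left
  have castSucc_ne_last : (Fin.last n).castSucc ≠ Fin.last (n + 1) := Fin.castSucc_ne_last _
  rw [← hdiff', Set.mem_inter_iff, prepend_mem_level_diff_initial213, hdiff]
  simp only [Set.mem_inter_iff, Set.mem_ofPred_eq, prepend_zero]
  grind [Fin.castSucc_inj]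

lemma ncard_level_one_inter_initial213 :
    (level (n + 3) 1 ∩ initial213 (n + 2)).ncard = (level n 0).ncard :=
  (ncard_eq_of_prepend_mem_iff (fun _ => (Fin.last (n + 1)).castSucc) fun _ _ =>
    prepend_mem_level_one_inter_initial213_iff_eq_castSucc_last).trans
    (ncard_level_zero_inter_apply_zero_eq_castSucc_last n)

lemma ncard_level_one_diff_initial213_three : (level 3 1 \ initial213 2).ncard = 0 := by
  rw [ncard_level_diff_initial213_succ, level_one_eq_empty (by decide), Set.empty_sdiff,
    Set.ncard_empty]

lemma ncard_level_one_three : (level 3 1).ncard = 1 := by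
  rw [← ncard_level_inter_add_ncard_level_diff_initial213, ncard_level_one_inter_initial213,
    ncard_level_one_diff_initial213_three, level_zero_eq_univ (by decide), Set.ncard_univ]
  simp

lemma two_mul_ncard_level_one_diff_initial213 :
    2 * (level (n + 4) 1 \ initial213 (n + 3)).ncard = (n + 2) * 2 ^ n := by
  induction n with
  | zero =>
    rw [ncard_level_diff_initial213_succ, ncard_level_one_three,
      ncard_level_one_diff_initial213_three]
    rfl
  | succ n ih =>
    have hinit : (level (n + 4) 1 ∩ initial213 (n + 3)).ncard = 2 ^ n :=
      (ncard_level_one_inter_initial213 (n + 1)).trans (ncard_level_zero_succ n)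
    calc 2 * (level (n + 5) 1 \ initial213 (n + 4)).ncard
      _ = 2 * ((level (n + 4) 1).ncard + (level (n + 4) 1 \ initial213 (n + 3)).ncard) := by
        rw [ncard_level_diff_initial213_succ]
      _ = 2 * 2 ^ n + 2 * (2 * (level (n + 4) 1 \ initial213 (n + 3)).ncard) := by
        rw [← ncard_level_inter_add_ncard_level_diff_initial213, hinit]; ring
      _ = (n + 1 + 2) * 2 ^ (n + 1) := by rw [ih]; ring

lemma two_mul_ncard_level_one : 2 * (level (n + 4) 1).ncard = (n + 4) * 2 ^ n := by
  rw [← ncard_level_inter_add_ncard_level_diff_initial213, mul_add,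
    two_mul_ncard_level_one_diff_initial213, ncard_level_one_inter_initial213 (n + 1),
    ncard_level_zero_succ]
  ring

end Counting

section Transfer

variable (n : ℕ)

lemma sAvoidContain_p132_p213 : sAvoidContain p132 p213 n = (level n 1).ncard :=
  rfl

lemma sAvoidContain_p231_p312 : sAvoidContain p231 p312 n = (level n 1).ncard := by
  rw [← sAvoidContain_p132_p213, ← sAvoidContain_mul_revPerm p132 p213,
    show p132 * Fin.revPerm = p231 by decide, show p213 * Fin.revPerm = p312 by decide]

lemma sAvoidContain_p312_p231 : sAvoidContain p312 p231 n = (level n 1).ncard := by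
  rw [← sAvoidContain_p132_p213, ← sAvoidContain_revPerm_mul p132 p213,
    show Fin.revPerm * p132 = p312 by decide, show Fin.revPerm * p213 = p231 by decide]

lemma sAvoidContain_p213_p132 : sAvoidContain p213 p132 n = (level n 1).ncard := by
  rw [← sAvoidContain_p231_p312, ← sAvoidContain_revPerm_mul p231 p312,
    show Fin.revPerm * p231 = p213 by decide, show Fin.revPerm * p312 = p132 by decide]

end Transfer

end PatternOcc

/-- Theorem 4.3: for each listed pair `(α,β)`, `s_n(α;β) = n·2^{n−5}` for `n ≥ 4`
(stated in the equivalent truncation-free form `2⁵·s_n(α;β) = n·2ⁿ`), and `s_3(α;β) = 1`. -/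
theorem sAvoidContain_eq_of_mem_classD :
    ∀ p ∈ [(p132, p213), (p213, p132), (p231, p312), (p312, p231)],
      (∀ n : ℕ, 4 ≤ n → 2 ^ 5 * sAvoidContain p.1 p.2 n = n * 2 ^ n) ∧
        sAvoidContain p.1 p.2 3 = 1 := by
  intro p hp
  have count_eq (n : ℕ) : sAvoidContain p.1 p.2 n = (PatternOcc.level n 1).ncard := by
    simp only [List.mem_cons, List.not_mem_nil, or_false] at hp
    rcases hp with rfl | rfl | rfl | rfl
    · exact PatternOcc.sAvoidContain_p132_p213 n
    · exact PatternOcc.sAvoidContain_p213_p132 n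
    · exact PatternOcc.sAvoidContain_p231_p312 n
    · exact PatternOcc.sAvoidContain_p312_p231 n
  refine ⟨fun n hn => ?_, (count_eq 3).trans PatternOcc.ncard_level_one_three⟩
  obtain ⟨m, rfl⟩ := Nat.exists_eq_add_of_le' hn
  calc 2 ^ 5 * sAvoidContain p.1 p.2 (m + 4)
    _ = 2 ^ 4 * (2 * (PatternOcc.level (m + 4) 1).ncard) := by rw [count_eq]; ring
    _ = (m + 4) * 2 ^ (m + 4) := by rw [PatternOcc.two_mul_ncard_level_one]; ring
end
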